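/- Let g ∈ GL(4,ℤ) be the block-diagonal matrix with two copies of the block [[0,−1],[1,−1]] on the diagonal (so g has order 3; it is the action on H¹ of a symplectic order-3 automorphism of a 2-torus). Then the induced automorphism ⋀²g of ⋀²ℤ⁴ has order 3, and there exists a generator vol of ⋀⁴ℤ⁴ such that, with respect to the wedge form determined by vol: the invariant lattice T = {x ∈ ⋀²ℤ⁴ : ⋀²g(x) = x} is isometric to U⊕A₂, and the coinvariant lattice S = T^⊥ is isometric to A₂(−1). -/

import Mathlib

set_option synthInstance.maxHeartbeats 1000000
set_option maxHeartbeats 1000000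

open ExteriorAlgebra Module Matrix

noncomputable section

/-- The image of the `n`-th exterior power under the algebra morphism induced by a linear map
lands in the `n`-th exterior power. -/
lemma map_mem_exteriorPower {R M N : Type*} [CommRing R] [AddCommGroup M] [Module R M]
    [AddCommGroup N] [Module R N] (f : M →ₗ[R] N) (n : ℕ) {x : ExteriorAlgebra R M}
    (hx : x ∈ ⋀[R]^n M) : ExteriorAlgebra.map f x ∈ ⋀[R]^n N := by
  rw [← ExteriorAlgebra.ιMulti_span_fixedDegree] at hx ⊢
  induction hx using Submodule.span_induction with
  | mem y hy =>
      obtain ⟨m, rfl⟩ := hy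
      rw [ExteriorAlgebra.map_apply_ιMulti]
      exact Submodule.subset_span ⟨f ∘ m, rfl⟩
  | zero => simp
  | add a b _ _ ha hb => rw [map_add]; exact Submodule.add_mem _ ha hb
  | smul r a _ ha => rw [_root_.map_smul]; exact Submodule.smul_mem _ r ha

/-- The `n`-th exterior power of a linear map. -/
def extPowMap {R M N : Type*} [CommRing R] [AddCommGroup M] [Module R M]
    [AddCommGroup N] [Module R N] (n : ℕ) (f : M →ₗ[R] N) : ⋀[R]^n M →ₗ[R] ⋀[R]^n N :=
  LinearMap.restrict (ExteriorAlgebra.map f).toLinearMap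
    (fun _ hx => map_mem_exteriorPower f n hx)

/-- The restriction of the form `b` to the submodule `T` admits Gram matrix `G` in some
basis; i.e. `(T, b|_T)` is isometric to the lattice with Gram matrix `G`. -/
def HasGramMatrix {M : Type*} [AddCommGroup M] [Module ℤ M] (b : M →ₗ[ℤ] M →ₗ[ℤ] ℤ)
    (T : Submodule ℤ M) {n : ℕ} (G : Matrix (Fin n) (Fin n) ℤ) : Prop :=
  ∃ v : Basis (Fin n) ℤ ↥T, ∀ i j, b (v i : M) (v j : M) = G i j

/-- The orthogonal complement of a submodule `T` with respect to a bilinear form `b`. -/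
def orthCompl {M : Type*} [AddCommGroup M] [Module ℤ M] (b : M →ₗ[ℤ] M →ₗ[ℤ] ℤ)
    (T : Submodule ℤ M) : Submodule ℤ M where
  carrier := {x | ∀ t ∈ T, b x t = 0}
  add_mem' := by
    intro x y hx hy t ht
    simp [map_add, hx t ht, hy t ht]
  zero_mem' := by
    intro t ht
    simp
  smul_mem' := by
    intro c x hx t ht
    simp [_root_.map_smul, hx t ht]

lemma extPowMap_ιMulti {R M N : Type*} [CommRing R] [AddCommGroup M] [Module R M]
    [AddCommGroup N] [Module R N] (n : ℕ) (f : M →ₗ[R] N) (m : Fin n → M) :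
    extPowMap n f (exteriorPower.ιMulti R n m) = exteriorPower.ιMulti R n (f ∘ m) :=
  Subtype.ext (ExteriorAlgebra.map_apply_ιMulti f m)

/-- Vectors in `T` that are dual to linear functionals `c` and through which every element of `T`
expands form a basis of `T`. -/
lemma HasGramMatrix.of_dual {M : Type*} [AddCommGroup M] [Module ℤ M]
    {b : M →ₗ[ℤ] M →ₗ[ℤ] ℤ} {T : Submodule ℤ M} {n : ℕ} {G : Matrix (Fin n) (Fin n) ℤ}
    (v : Fin n → M) (hv : ∀ i, v i ∈ T) (c : Fin n → M →ₗ[ℤ] ℤ)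
    (hc : ∀ i j, c i (v j) = if i = j then 1 else 0)
    (hT : ∀ x ∈ T, x = ∑ i, c i x • v i) (hG : ∀ i j, b (v i) (v j) = G i j) :
    HasGramMatrix b T G := by
  have hli : LinearIndependent ℤ (fun i => (⟨v i, hv i⟩ : T)) := by
    rw [Fintype.linearIndependent_iff]
    intro a ha i
    have h := congrArg (fun x : T => c i x) ha
    simpa [hc] using h
  have hsp : ⊤ ≤ Submodule.span ℤ (Set.range (fun i => (⟨v i, hv i⟩ : T))) := by
    rintro ⟨x, hx⟩ -
    have h : (⟨x, hx⟩ : T) = ∑ i, c i x • (⟨v i, hv i⟩ : T) := by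
      apply Subtype.ext
      simpa using hT x hx
    rw [h]
    exact Submodule.sum_mem _ fun i _ =>
      Submodule.smul_mem _ _ (Submodule.subset_span ⟨i, rfl⟩)
  refine ⟨Basis.mk hli hsp, fun i j => ?_⟩
  simpa using hG i j

/-- The bivector `eᵢ ∧ eⱼ` in `⋀²ℤ⁴`. -/
def stdBivector (i j : Fin 4) : ⋀[ℤ]^2 (Fin 4 → ℤ) :=
  exteriorPower.ιMulti ℤ 2 ![Pi.single i 1, Pi.single j 1]

/-- The `(i, j)` Plücker coordinate on `⋀²ℤ⁴`. -/
def plucker (i j : Fin 4) : ⋀[ℤ]^2 (Fin 4 → ℤ) →ₗ[ℤ] ℤ :=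
  exteriorPower.pairingDual ℤ (Fin 4 → ℤ) 2
    (exteriorPower.ιMulti ℤ 2 ![LinearMap.proj i, LinearMap.proj j])

lemma plucker_ιMulti (i j : Fin 4) (m : Fin 2 → Fin 4 → ℤ) :
    plucker i j (exteriorPower.ιMulti ℤ 2 m) = m 0 i * m 1 j - m 0 j * m 1 i := by
  simp [plucker, exteriorPower.pairingDual_ιMulti_ιMulti, Matrix.det_fin_two]

lemma plucker_stdBivector (i j k l : Fin 4) :
    plucker i j (stdBivector k l) =
      (if i = k then 1 else 0) * (if j = l then 1 else 0) -
        (if j = k then 1 else 0) * (if i = l then 1 else 0) := by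
  simp [stdBivector, plucker_ιMulti, Pi.single_apply]

lemma stdBivector_swap (i j : Fin 4) : stdBivector i j = -stdBivector j i := by
  have h := (exteriorPower.ιMulti ℤ 2).map_swap
    (![Pi.single j 1, Pi.single i 1] : Fin 2 → Fin 4 → ℤ) (zero_ne_one (α := Fin 2))
  rw [stdBivector, stdBivector, ← h]
  congr 1
  ext k
  fin_cases k <;> simp

lemma plucker_expansion (x : ⋀[ℤ]^2 (Fin 4 → ℤ)) :
    x = plucker 0 1 x • stdBivector 0 1 + plucker 0 2 x • stdBivector 0 2 +
      plucker 0 3 x • stdBivector 0 3 + plucker 1 2 x • stdBivector 1 2 +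
      plucker 1 3 x • stdBivector 1 3 + plucker 2 3 x • stdBivector 2 3 := by
  have h : LinearMap.id =
      (plucker 0 1).smulRight (stdBivector 0 1) + (plucker 0 2).smulRight (stdBivector 0 2) +
      (plucker 0 3).smulRight (stdBivector 0 3) + (plucker 1 2).smulRight (stdBivector 1 2) +
      (plucker 1 3).smulRight (stdBivector 1 3) + (plucker 2 3).smulRight (stdBivector 2 3) := by
    apply exteriorPower.linearMap_ext
    refine Basis.ext_alternating (Pi.basisFun ℤ (Fin 4)) fun v hv => ?_
    have e : (fun i => (Pi.basisFun ℤ (Fin 4)) (v i)) =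
        ![Pi.single (v 0) 1, Pi.single (v 1) 1] := by
      ext k
      fin_cases k <;> simp
    have hne : v 0 ≠ v 1 := fun h => zero_ne_one (hv h)
    rw [e]
    change stdBivector (v 0) (v 1) = plucker 0 1 (stdBivector (v 0) (v 1)) • stdBivector 0 1 +
      plucker 0 2 (stdBivector (v 0) (v 1)) • stdBivector 0 2 +
      plucker 0 3 (stdBivector (v 0) (v 1)) • stdBivector 0 3 +
      plucker 1 2 (stdBivector (v 0) (v 1)) • stdBivector 1 2 +
      plucker 1 3 (stdBivector (v 0) (v 1)) • stdBivector 1 3 +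
      plucker 2 3 (stdBivector (v 0) (v 1)) • stdBivector 2 3
    simp only [plucker_stdBivector]
    generalize v 0 = p at hne ⊢
    generalize v 1 = q at hne ⊢
    rcases lt_or_gt_of_ne hne with hlt | hlt
    · fin_cases p <;> fin_cases q <;> simp at hlt ⊢
    · rw [stdBivector_swap]
      fin_cases p <;> fin_cases q <;> simp at hlt ⊢
  exact LinearMap.congr_fun h x

lemma bivector_ext {x y : ⋀[ℤ]^2 (Fin 4 → ℤ)} (h01 : plucker 0 1 x = plucker 0 1 y)
    (h02 : plucker 0 2 x = plucker 0 2 y) (h03 : plucker 0 3 x = plucker 0 3 y)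
    (h12 : plucker 1 2 x = plucker 1 2 y) (h13 : plucker 1 3 x = plucker 1 3 y)
    (h23 : plucker 2 3 x = plucker 2 3 y) : x = y := by
  rw [plucker_expansion x, plucker_expansion y, h01, h02, h03, h12, h13, h23]

/-- The volume form `-e₀ ∧ e₁ ∧ e₂ ∧ e₃`. -/
def negVol : ⋀[ℤ]^4 (Fin 4 → ℤ) := -exteriorPower.ιMulti ℤ 4 (Pi.basisFun ℤ (Fin 4))

lemma ιMulti_four (m : Fin 4 → Fin 4 → ℤ) :
    exteriorPower.ιMulti ℤ 4 m = (-Matrix.det (Matrix.of m)) • negVol := by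
  have h : exteriorPower.ιMulti ℤ 4 = (LinearMap.toSpanSingleton ℤ (⋀[ℤ]^4 (Fin 4 → ℤ))
      (-negVol)).compAlternatingMap (Pi.basisFun ℤ (Fin 4)).det := by
    refine Basis.ext_alternating (Pi.basisFun ℤ (Fin 4)) fun v hv => ?_
    let σ : Equiv.Perm (Fin 4) := Equiv.ofBijective v (Finite.injective_iff_bijective.1 hv)
    change exteriorPower.ιMulti ℤ 4 (Pi.basisFun ℤ (Fin 4) ∘ σ) =
      LinearMap.toSpanSingleton ℤ _ (-negVol)
        ((Pi.basisFun ℤ (Fin 4)).det (Pi.basisFun ℤ (Fin 4) ∘ σ))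
    rw [AlternatingMap.map_perm, AlternatingMap.map_perm, Basis.det_self]
    simp [negVol]
  rw [h]
  simp only [LinearMap.compAlternatingMap_apply, LinearMap.toSpanSingleton_apply, smul_neg,
    neg_smul, Pi.basisFun_det]
  rfl

lemma span_negVol : Submodule.span ℤ {negVol} = ⊤ := by
  rw [eq_top_iff, ← exteriorPower.ιMulti_span, Submodule.span_le]
  rintro _ ⟨m, rfl⟩
  rw [ιMulti_four]
  exact Submodule.smul_mem _ _ (Submodule.mem_span_singleton_self _)

lemma smul_negVol_injective {a b : ℤ} (h : a • negVol = b • negVol) : a = b := by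
  have := congrArg (exteriorPower.alternatingMapLinearEquiv (Pi.basisFun ℤ (Fin 4)).det) h
  simpa only [negVol, _root_.map_smul, map_neg, Basis.det_self, smul_eq_mul, mul_neg, mul_one,
    exteriorPower.alternatingMapLinearEquiv_apply_ιMulti, neg_inj] using this

lemma stdBivector_mul (i j k l : Fin 4) :
    (stdBivector i j : ExteriorAlgebra ℤ (Fin 4 → ℤ)) * stdBivector k l =
      (exteriorPower.ιMulti ℤ 4 ![Pi.single i 1, Pi.single j 1, Pi.single k 1, Pi.single l 1] :
        ⋀[ℤ]^4 (Fin 4 → ℤ)) := by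
  simp [stdBivector, ExteriorAlgebra.ιMulti_apply, mul_assoc]

lemma wedgeForm_stdBivector {b : ⋀[ℤ]^2 (Fin 4 → ℤ) →ₗ[ℤ] ⋀[ℤ]^2 (Fin 4 → ℤ) →ₗ[ℤ] ℤ}
    (hb : ∀ x y : ⋀[ℤ]^2 (Fin 4 → ℤ),
      (x : ExteriorAlgebra ℤ (Fin 4 → ℤ)) * (y : ExteriorAlgebra ℤ (Fin 4 → ℤ))
        = b x y • (negVol : ExteriorAlgebra ℤ (Fin 4 → ℤ)))
    (i j k l : Fin 4) :
    b (stdBivector i j) (stdBivector k l) = -Matrix.det (Matrix.of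
      ![Pi.single i 1, Pi.single j 1, Pi.single k 1, Pi.single l 1]) := by
  apply smul_negVol_injective
  rw [← ιMulti_four]
  apply Subtype.ext
  rw [← stdBivector_mul, hb]
  rfl

lemma wedgeForm_apply {b : ⋀[ℤ]^2 (Fin 4 → ℤ) →ₗ[ℤ] ⋀[ℤ]^2 (Fin 4 → ℤ) →ₗ[ℤ] ℤ}
    (hb : ∀ x y : ⋀[ℤ]^2 (Fin 4 → ℤ),
      (x : ExteriorAlgebra ℤ (Fin 4 → ℤ)) * (y : ExteriorAlgebra ℤ (Fin 4 → ℤ))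
        = b x y • (negVol : ExteriorAlgebra ℤ (Fin 4 → ℤ)))
    (x y : ⋀[ℤ]^2 (Fin 4 → ℤ)) :
    b x y = -(plucker 0 1 x * plucker 2 3 y) + plucker 0 2 x * plucker 1 3 y
      - plucker 0 3 x * plucker 1 2 y - plucker 1 2 x * plucker 0 3 y
      + plucker 1 3 x * plucker 0 2 y - plucker 2 3 x * plucker 0 1 y := by
  conv_lhs => rw [plucker_expansion x, plucker_expansion y]
  simp only [map_add, LinearMap.add_apply, _root_.map_smul, LinearMap.smul_apply,
    wedgeForm_stdBivector hb, smul_eq_mul]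
  simp [Matrix.det_succ_row_zero, Fin.sum_univ_succ, Fin.succAbove, Pi.single_apply]
  ring

lemma plucker_extPowMap_stdBivector {f : (Fin 4 → ℤ) →ₗ[ℤ] (Fin 4 → ℤ)}
    {g : Matrix (Fin 4) (Fin 4) ℤ} (hf : ∀ v, f v = g.mulVec v) (i j k l : Fin 4) :
    plucker i j (extPowMap 2 f (stdBivector k l)) = g i k * g j l - g j k * g i l := by
  simp [stdBivector, extPowMap_ιMulti, plucker_ιMulti, hf]

lemma plucker_extPowMap {f : (Fin 4 → ℤ) →ₗ[ℤ] (Fin 4 → ℤ)}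
    (hf : ∀ v, f v =
      !![0, -1, 0, 0; 1, -1, 0, 0; 0, 0, 0, -1; 0, 0, 1, -1].mulVec v)
    (x : ⋀[ℤ]^2 (Fin 4 → ℤ)) :
    plucker 0 1 (extPowMap 2 f x) = plucker 0 1 x ∧
    plucker 0 2 (extPowMap 2 f x) = plucker 1 3 x ∧
    plucker 0 3 (extPowMap 2 f x) = plucker 1 3 x - plucker 1 2 x ∧
    plucker 1 2 (extPowMap 2 f x) = plucker 1 3 x - plucker 0 3 x ∧
    plucker 1 3 (extPowMap 2 f x) =
      plucker 0 2 x - plucker 0 3 x - plucker 1 2 x + plucker 1 3 x ∧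
    plucker 2 3 (extPowMap 2 f x) = plucker 2 3 x := by
  refine ⟨?_, ?_, ?_, ?_, ?_, ?_⟩ <;>
  · conv_lhs => rw [plucker_expansion x]
    simp only [map_add, _root_.map_smul, plucker_extPowMap_stdBivector hf, smul_eq_mul]
    simp
    try ring

lemma mem_ker_extPowMap_sub_id {f : (Fin 4 → ℤ) →ₗ[ℤ] (Fin 4 → ℤ)}
    (hf : ∀ v, f v =
      !![0, -1, 0, 0; 1, -1, 0, 0; 0, 0, 0, -1; 0, 0, 1, -1].mulVec v)
    (x : ⋀[ℤ]^2 (Fin 4 → ℤ)) :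
    x ∈ LinearMap.ker (extPowMap 2 f - LinearMap.id) ↔
      plucker 0 2 x = plucker 1 3 x ∧ plucker 0 3 x + plucker 1 2 x = plucker 1 3 x := by
  obtain ⟨h01, h02, h03, h12, h13, h23⟩ := plucker_extPowMap hf x
  rw [LinearMap.mem_ker, LinearMap.sub_apply, LinearMap.id_apply, sub_eq_zero]
  constructor
  · intro h
    rw [h] at h02 h03
    omega
  · rintro ⟨h, h'⟩
    apply bivector_ext <;> omega

lemma orderOf_extPowMap {f : (Fin 4 → ℤ) →ₗ[ℤ] (Fin 4 → ℤ)}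
    (hf : ∀ v, f v =
      !![0, -1, 0, 0; 1, -1, 0, 0; 0, 0, 0, -1; 0, 0, 1, -1].mulVec v) :
    orderOf (extPowMap 2 f) = 3 := by
  have : Fact (Nat.Prime 3) := ⟨Nat.prime_three⟩
  apply orderOf_eq_prime
  · refine LinearMap.ext fun x => ?_
    change extPowMap 2 f (extPowMap 2 f (extPowMap 2 f x)) = x
    have h₁ := plucker_extPowMap hf x
    have h₂ := plucker_extPowMap hf (extPowMap 2 f x)
    have h₃ := plucker_extPowMap hf (extPowMap 2 f (extPowMap 2 f x))
    apply bivector_ext <;> omega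
  · intro h
    have h₁ := (plucker_extPowMap hf (stdBivector 0 2)).2.1
    rw [h, Module.End.one_apply] at h₁
    simp [plucker_stdBivector] at h₁

lemma mem_orthCompl_ker_extPowMap_sub_id {f : (Fin 4 → ℤ) →ₗ[ℤ] (Fin 4 → ℤ)}
    (hf : ∀ v, f v =
      !![0, -1, 0, 0; 1, -1, 0, 0; 0, 0, 0, -1; 0, 0, 1, -1].mulVec v)
    {b : ⋀[ℤ]^2 (Fin 4 → ℤ) →ₗ[ℤ] ⋀[ℤ]^2 (Fin 4 → ℤ) →ₗ[ℤ] ℤ}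
    (hb : ∀ x y : ⋀[ℤ]^2 (Fin 4 → ℤ),
      (x : ExteriorAlgebra ℤ (Fin 4 → ℤ)) * (y : ExteriorAlgebra ℤ (Fin 4 → ℤ))
        = b x y • (negVol : ExteriorAlgebra ℤ (Fin 4 → ℤ)))
    (x : ⋀[ℤ]^2 (Fin 4 → ℤ)) :
    x ∈ orthCompl b (LinearMap.ker (extPowMap 2 f - LinearMap.id)) ↔
      plucker 0 1 x = 0 ∧ plucker 2 3 x = 0 ∧
      plucker 0 3 x = plucker 0 2 x + plucker 1 3 x ∧
      plucker 1 2 x = plucker 0 2 x + plucker 1 3 x := by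
  constructor
  · intro h
    have key : ∀ t, t ∈ LinearMap.ker (extPowMap 2 f - LinearMap.id) → b x t = 0 := h
    simp only [mem_ker_extPowMap_sub_id hf, wedgeForm_apply hb] at key
    have h₁ := key (stdBivector 0 1) (by simp [plucker_stdBivector])
    have h₂ := key (stdBivector 2 3) (by simp [plucker_stdBivector])
    have h₃ := key (stdBivector 0 2 + stdBivector 0 3 + stdBivector 1 3)
      (by simp [plucker_stdBivector])
    have h₄ := key (stdBivector 0 2 + stdBivector 1 2 + stdBivector 1 3)
      (by simp [plucker_stdBivector])
    simp [plucker_stdBivector] at h₁ h₂ h₃ h₄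
    omega
  · rintro ⟨h01, h23, h03, h12⟩ t ht
    obtain ⟨h02, h13⟩ := (mem_ker_extPowMap_sub_id hf t).1 ht
    rw [wedgeForm_apply hb, h01, h23, h03, h12, h02, ← h13]
    ring

lemma hasGramMatrix_invariant {f : (Fin 4 → ℤ) →ₗ[ℤ] (Fin 4 → ℤ)}
    (hf : ∀ v, f v =
      !![0, -1, 0, 0; 1, -1, 0, 0; 0, 0, 0, -1; 0, 0, 1, -1].mulVec v)
    {b : ⋀[ℤ]^2 (Fin 4 → ℤ) →ₗ[ℤ] ⋀[ℤ]^2 (Fin 4 → ℤ) →ₗ[ℤ] ℤ}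
    (hb : ∀ x y : ⋀[ℤ]^2 (Fin 4 → ℤ),
      (x : ExteriorAlgebra ℤ (Fin 4 → ℤ)) * (y : ExteriorAlgebra ℤ (Fin 4 → ℤ))
        = b x y • (negVol : ExteriorAlgebra ℤ (Fin 4 → ℤ))) :
    HasGramMatrix b (LinearMap.ker (extPowMap 2 f - LinearMap.id))
      !![0, 1, 0, 0; 1, 0, 0, 0; 0, 0, 2, 1; 0, 0, 1, 2] := by
  refine HasGramMatrix.of_dual
    ![stdBivector 0 1, -stdBivector 2 3, stdBivector 0 2 + stdBivector 0 3 + stdBivector 1 3,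
      stdBivector 0 2 + stdBivector 1 2 + stdBivector 1 3] ?_
    ![plucker 0 1, -plucker 2 3, plucker 0 3, plucker 1 2] ?_ ?_ ?_
  · intro i
    rw [mem_ker_extPowMap_sub_id hf]
    fin_cases i <;> simp [plucker_stdBivector]
  · intro i j
    fin_cases i <;> fin_cases j <;> simp [plucker_stdBivector]
  · intro x hx
    rw [mem_ker_extPowMap_sub_id hf] at hx
    apply bivector_ext <;> simp [Fin.sum_univ_succ, plucker_stdBivector] <;> omega
  · intro i j
    rw [wedgeForm_apply hb]
    fin_cases i <;> fin_cases j <;> simp [plucker_stdBivector]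

lemma hasGramMatrix_coinvariant {f : (Fin 4 → ℤ) →ₗ[ℤ] (Fin 4 → ℤ)}
    (hf : ∀ v, f v =
      !![0, -1, 0, 0; 1, -1, 0, 0; 0, 0, 0, -1; 0, 0, 1, -1].mulVec v)
    {b : ⋀[ℤ]^2 (Fin 4 → ℤ) →ₗ[ℤ] ⋀[ℤ]^2 (Fin 4 → ℤ) →ₗ[ℤ] ℤ}
    (hb : ∀ x y : ⋀[ℤ]^2 (Fin 4 → ℤ),
      (x : ExteriorAlgebra ℤ (Fin 4 → ℤ)) * (y : ExteriorAlgebra ℤ (Fin 4 → ℤ))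
        = b x y • (negVol : ExteriorAlgebra ℤ (Fin 4 → ℤ))) :
    HasGramMatrix b (orthCompl b (LinearMap.ker (extPowMap 2 f - LinearMap.id)))
      !![-2, -1; -1, -2] := by
  refine HasGramMatrix.of_dual
    ![stdBivector 0 2 + stdBivector 0 3 + stdBivector 1 2,
      stdBivector 0 3 + stdBivector 1 2 + stdBivector 1 3] ?_
    ![plucker 0 2, plucker 1 3] ?_ ?_ ?_
  · intro i
    rw [mem_orthCompl_ker_extPowMap_sub_id hf hb]
    fin_cases i <;> simp [plucker_stdBivector]
  · intro i j
    fin_cases i <;> fin_cases j <;> simp [plucker_stdBivector]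
  · intro x hx
    rw [mem_orthCompl_ker_extPowMap_sub_id hf hb] at hx
    apply bivector_ext <;> simp [Fin.sum_univ_succ, plucker_stdBivector] <;> omega
  · intro i j
    rw [wedgeForm_apply hb]
    fin_cases i <;> fin_cases j <;> simp [plucker_stdBivector]

/-- For the order-3 matrix `g` (the action on `H¹` of a symplectic order-3 automorphism of a
`2`-torus), the induced automorphism `⋀²g` of `⋀²ℤ⁴` has order 3 and, for a suitable
generator `vol` of `⋀⁴ℤ⁴` and associated wedge form, the invariant lattice `T` is isometric
to `U ⊕ A₂` and the coinvariant lattice `S = T^⊥` is isometric to `A₂(-1)`. -/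
theorem stmt_19 (g : Matrix (Fin 4) (Fin 4) ℤ)
    (hg : g = !![0, -1, 0, 0; 1, -1, 0, 0; 0, 0, 0, -1; 0, 0, 1, -1])
    (gE : (Fin 4 → ℤ) ≃ₗ[ℤ] (Fin 4 → ℤ)) (hgE : ∀ v, gE v = g.mulVec v) :
    orderOf (extPowMap 2 (gE : (Fin 4 → ℤ) →ₗ[ℤ] (Fin 4 → ℤ))) = 3 ∧
    ∃ vol : ⋀[ℤ]^4 (Fin 4 → ℤ), Submodule.span ℤ {vol} = ⊤ ∧
      ∀ b : ⋀[ℤ]^2 (Fin 4 → ℤ) →ₗ[ℤ] ⋀[ℤ]^2 (Fin 4 → ℤ) →ₗ[ℤ] ℤ,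
        (∀ x y : ⋀[ℤ]^2 (Fin 4 → ℤ),
          (x : ExteriorAlgebra ℤ (Fin 4 → ℤ)) * (y : ExteriorAlgebra ℤ (Fin 4 → ℤ))
            = b x y • (vol : ExteriorAlgebra ℤ (Fin 4 → ℤ))) →
        HasGramMatrix b
            (LinearMap.ker (extPowMap 2 (gE : (Fin 4 → ℤ) →ₗ[ℤ] (Fin 4 → ℤ)) - LinearMap.id))
            !![0, 1, 0, 0; 1, 0, 0, 0; 0, 0, 2, 1; 0, 0, 1, 2] ∧
        HasGramMatrix b
            (orthCompl b
              (LinearMap.ker (extPowMap 2 (gE : (Fin 4 → ℤ) →ₗ[ℤ] (Fin 4 → ℤ)) - LinearMap.id)))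
            !![-2, -1; -1, -2] := by
  subst hg
  exact ⟨orderOf_extPowMap hgE, negVol, span_negVol, fun b hb =>
    ⟨hasGramMatrix_invariant hgE hb, hasGramMatrix_coinvariant hgE hb⟩⟩
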